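/- The exponential generating function of the up-down (alternating) permutation numbers E_n satisfies \sum_{n\ge 0} E_n x^n/n! = \sec x + \tan x. -/

import Mathlib

open scoped BigOperators

/-- A list of integers is *up-down* (alternating) if it rises, falls, rises, ... -/
def IsUpDown (l : List ℤ) : Prop :=
  ∀ i : ℕ, i + 1 < l.length →
    (Even i → l.getD i 0 < l.getD (i + 1) 0) ∧ (¬ Even i → l.getD (i + 1) 0 < l.getD i 0)

/-- A list of integers is *down-up* if it falls, rises, falls, ... -/
def IsDownUp (l : List ℤ) : Prop :=
  ∀ i : ℕ, i + 1 < l.length →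
    (Even i → l.getD (i + 1) 0 < l.getD i 0) ∧ (¬ Even i → l.getD i 0 < l.getD (i + 1) 0)

/-- The list `[1, 2, ..., m]` as integers. -/
def baseList (m : ℕ) : List ℤ := (List.range m).map fun k => (k : ℤ) + 1

/-- The Euler number `E_m`: the number of up-down permutations of `{1, ..., m}`. -/
noncomputable def eulerNum (m : ℕ) : ℕ :=
  Nat.card {l : List ℤ // l.Perm (baseList m) ∧ IsUpDown l}

/-!
Cutting an up-down arrangement of `n + 1 ≥ 2` numbers at its maximum leaves two up-down
arrangements, of which the left one has odd length, since the maximum must sit at a peak. Hence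
`E_{n+1} = [n = 0] + ∑_{k odd} (n choose k) E_k E_{n-k}`. This determines the number of up-down
arrangements of a set from its size alone, so both parts may be counted by Euler numbers.

On the analytic side, `f = sec + tan` and `g = tan` satisfy `f' = 1 + g f` and `g' = 1 + g g`. By
the Leibniz rule the derivatives at `0` obey the same recurrence, those of `g` being the
odd-indexed `E_k`. As `f` is holomorphic on the disc of radius `π / 2`, its Taylor series converges
to it there.
-/

section Enumerations

variable {α : Type*} [DecidableEq α] {m : α} {u v : List α} {t : Finset α}

theorem perm_iff_nodup_and_toFinset_eq (hv : v.Nodup) :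
    u.Perm v ↔ u.Nodup ∧ u.toFinset = v.toFinset :=
  ⟨fun h => ⟨h.nodup_iff.2 hv, List.toFinset_eq_of_perm _ _ h⟩,
    fun h => List.perm_of_nodup_nodup_toFinset_eq h.1 hv h.2⟩

theorem nodup_append_cons_and_toFinset_eq_insert_iff (hm : m ∉ t) :
    (u ++ m :: v).Nodup ∧ (u ++ m :: v).toFinset = insert m t ↔
      ∃ A ⊆ t, (u.Nodup ∧ u.toFinset = A) ∧ v.Nodup ∧ v.toFinset = t \ A := by
  simp only [List.nodup_append', List.disjoint_left, Finset.ext_iff, List.mem_toFinset,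
    List.mem_append, List.mem_cons, Finset.mem_insert, Finset.mem_sdiff, List.nodup_cons,
    Finset.subset_iff]
  constructor
  · rintro ⟨⟨hu, ⟨hmv, hv⟩, hdisj⟩, h⟩
    exact ⟨u.toFinset, by grind [List.mem_toFinset], by simp [hu], hv,
      by grind [List.mem_toFinset]⟩
  · rintro ⟨A, hA, ⟨hu, huA⟩, hv, hvA⟩
    grind

end Enumerations

section Alternation

variable {a b m : ℤ} {l u v : List ℤ}

@[simp]
theorem isUpDown_nil : IsUpDown [] := by
  simp [IsUpDown]

@[simp]
theorem isUpDown_singleton : IsUpDown [a] := by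
  simp [IsUpDown]

@[simp]
theorem isDownUp_nil : IsDownUp [] := by
  simp [IsDownUp]

@[simp]
theorem isDownUp_singleton : IsDownUp [a] := by
  simp [IsDownUp]

theorem isUpDown_cons_cons : IsUpDown (a :: b :: l) ↔ a < b ∧ IsDownUp (b :: l) := by
  refine ⟨fun h => ⟨by simpa using h 0, fun i hi => ?_⟩, fun ⟨hab, h⟩ i hi => ?_⟩
  · simpa [Nat.even_add_one, and_comm] using h (i + 1) (by simpa using hi)
  · cases i with
    | zero => simpa using hab
    | succ i => simpa [Nat.even_add_one, and_comm] using h i (by simpa using hi)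

theorem isDownUp_cons_cons : IsDownUp (a :: b :: l) ↔ b < a ∧ IsUpDown (b :: l) := by
  refine ⟨fun h => ⟨by simpa using h 0, fun i hi => ?_⟩, fun ⟨hab, h⟩ i hi => ?_⟩
  · simpa [Nat.even_add_one, and_comm] using h (i + 1) (by simpa using hi)
  · cases i with
    | zero => simpa using hab
    | succ i => simpa [Nat.even_add_one, and_comm] using h i (by simpa using hi)

theorem isUpDown_cons_iff_of_forall_lt (hv : ∀ x ∈ v, x < m) : IsUpDown (m :: v) ↔ v = [] := by
  cases v with
  | nil => simp
  | cons b v => simp [isUpDown_cons_cons, (hv b (by simp)).not_gt]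

theorem isDownUp_cons_iff_of_forall_lt (hv : ∀ x ∈ v, x < m) :
    IsDownUp (m :: v) ↔ IsUpDown v := by
  cases v with
  | nil => simp
  | cons b v => simp [isDownUp_cons_cons, hv b]

mutual

theorem isUpDown_append_cons_iff_of_forall_lt :
    ∀ {u v : List ℤ} {m : ℤ}, (∀ x ∈ u, x < m) → (∀ x ∈ v, x < m) →
      (IsUpDown (u ++ m :: v) ↔ IsUpDown u ∧ IsUpDown v ∧ (Odd u.length ∨ u = [] ∧ v = []))
  | [], v, m, _, hv => by
    simp +contextual [isUpDown_cons_iff_of_forall_lt hv]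
  | [a], v, m, hu, hv => by
    simp [isUpDown_cons_cons, isDownUp_cons_iff_of_forall_lt hv, hu a]
  | a :: b :: u, v, m, hu, hv => by
    have ih := isDownUp_append_cons_iff_of_forall_lt (u := b :: u) (by grind) hv
    rw [List.cons_append] at ih
    simp [isUpDown_cons_cons, ih, and_assoc, Nat.odd_add_one, Nat.even_add_one]

theorem isDownUp_append_cons_iff_of_forall_lt :
    ∀ {u v : List ℤ} {m : ℤ}, (∀ x ∈ u, x < m) → (∀ x ∈ v, x < m) →
      (IsDownUp (u ++ m :: v) ↔ IsDownUp u ∧ IsUpDown v ∧ Even u.length)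
  | [], v, m, _, hv => by
    simp [isDownUp_cons_iff_of_forall_lt hv]
  | [a], _, m, hu, _ => by
    simp [isDownUp_cons_cons, (hu a (by simp)).not_gt]
  | a :: b :: u, v, m, hu, hv => by
    have ih := isUpDown_append_cons_iff_of_forall_lt (u := b :: u) (by grind) hv
    rw [List.cons_append] at ih
    simp [isDownUp_cons_cons, ih, and_assoc, Nat.odd_add_one, Nat.even_add_one]

end

end Alternation

section Arrangements

variable {m : ℤ} {l u v : List ℤ} {s t : Finset ℤ}

open Classical in
/-- The up-down arrangements of a finite set `s` of integers: the alternating lists in which each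
element of `s` occurs exactly once. -/
noncomputable def upDowns (s : Finset ℤ) : Finset (List ℤ) :=
  {l ∈ s.toList.permutations.toFinset | IsUpDown l}

theorem mem_upDowns : l ∈ upDowns s ↔ (l.Nodup ∧ l.toFinset = s) ∧ IsUpDown l := by
  simp [upDowns, perm_iff_nodup_and_toFinset_eq s.nodup_toList]

theorem notMem_of_mem_upDowns (h : l ∈ upDowns s) (hm : m ∉ s) : m ∉ l := by
  obtain ⟨⟨-, rfl⟩, -⟩ := mem_upDowns.1 h
  simpa using hm

theorem upDowns_singleton (m : ℤ) : upDowns {m} = {[m]} := by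
  ext l
  simp +contextual [upDowns]

theorem append_cons_mem_upDowns_insert_iff (hm : ∀ x ∈ t, x < m) (ht : t.Nonempty) :
    u ++ m :: v ∈ upDowns (insert m t) ↔
      ∃ A ⊆ t, Odd A.card ∧ u ∈ upDowns A ∧ v ∈ upDowns (t \ A) := by
  have hmt : m ∉ t := fun h => (hm m h).false
  have hupdown : ∀ A ⊆ t, u.Nodup → u.toFinset = A → v.toFinset = t \ A →
      (IsUpDown (u ++ m :: v) ↔ IsUpDown u ∧ IsUpDown v ∧ Odd A.card) := by
    rintro _ hA hu rfl hv
    have hu_lt (x : ℤ) (hx : x ∈ u) : x < m := hm x (hA (List.mem_toFinset.2 hx))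
    have hv_lt (x : ℤ) (hx : x ∈ v) : x < m :=
      hm x (Finset.sdiff_subset (hv ▸ List.mem_toFinset.2 hx))
    have hne : ¬(u = [] ∧ v = []) := by
      rintro ⟨rfl, rfl⟩
      simp [eq_comm, ht.ne_empty] at hv
    rw [isUpDown_append_cons_iff_of_forall_lt hu_lt hv_lt, List.toFinset_card_of_nodup hu,
      or_iff_left hne]
  simp only [mem_upDowns, nodup_append_cons_and_toFinset_eq_insert_iff hmt, ← exists_and_right]
  exact exists_congr fun A => by grind

theorem card_upDowns_insert (hm : ∀ x ∈ t, x < m) (ht : t.Nonempty) :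
    (upDowns (insert m t)).card =
      ∑ A ∈ t.powerset with Odd A.card, (upDowns A).card * (upDowns (t \ A)).card := by
  have hmt : m ∉ t := fun h => (hm m h).false
  simp_rw [← Finset.card_product, ← Finset.card_sigma]
  symm
  refine Finset.card_bij (fun p _ => p.2.1 ++ m :: p.2.2) ?_ ?_ ?_
  · rintro ⟨A, u, v⟩ h
    simp only [Finset.mem_sigma, Finset.mem_filter, Finset.mem_powerset, Finset.mem_product] at h
    exact (append_cons_mem_upDowns_insert_iff hm ht).2 ⟨A, h.1.1, h.1.2, h.2⟩
  · rintro ⟨A, u, v⟩ h ⟨A', u', v'⟩ h' heq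
    simp only [Finset.mem_sigma, Finset.mem_filter, Finset.mem_powerset, Finset.mem_product] at h h'
    have hmu : m ∉ u := notMem_of_mem_upDowns h.2.1 fun hmA => hmt (h.1.1 hmA)
    have hmv : m ∉ v := notMem_of_mem_upDowns h.2.2 (by simp [hmt])
    obtain ⟨rfl, -, rfl⟩ := (List.append_cons_inj_of_notMem hmu hmv).1 heq
    obtain rfl : A = A' := (mem_upDowns.1 h.2.1).1.2.symm.trans (mem_upDowns.1 h'.2.1).1.2
    rfl
  · intro l hl
    have hml : m ∈ l := by simp [← List.mem_toFinset, (mem_upDowns.1 hl).1.2]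
    obtain ⟨u, v, rfl⟩ := List.append_of_mem hml
    obtain ⟨A, hA, hodd, huv⟩ := (append_cons_mem_upDowns_insert_iff hm ht).1 hl
    exact ⟨⟨A, u, v⟩, by simp [hA, hodd, huv], rfl⟩

end Arrangements

section EulerNumbers

theorem length_baseList (n : ℕ) : (baseList n).length = n := by
  simp [baseList]

-- In `baseList` the coercion is elaborated as a monadic lift of `List.range n` to `List ℤ`.
theorem nodup_baseList (n : ℕ) : (baseList n).Nodup := by
  simpa [baseList, ← List.map_eq_flatMap] using
    (List.nodup_range.map Nat.cast_injective).map (add_left_injective (1 : ℤ))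

theorem card_toFinset_baseList (n : ℕ) : (baseList n).toFinset.card = n := by
  rw [List.toFinset_card_of_nodup (nodup_baseList n), length_baseList]

theorem eulerNum_eq_card_upDowns_baseList (n : ℕ) :
    eulerNum n = (upDowns (baseList n).toFinset).card :=
  Nat.subtype_card _ fun l => by
    rw [mem_upDowns, perm_iff_nodup_and_toFinset_eq (nodup_baseList n)]

theorem card_upDowns_eq_sum_of_card_eq_succ {n : ℕ} {F : ℕ → ℕ}
    (hF : ∀ A : Finset ℤ, A.card ≤ n → (upDowns A).card = F A.card)
    {s : Finset ℤ} (hs : s.card = n + 1) :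
    (upDowns s).card = (if n = 0 then 1 else 0) +
      ∑ k ∈ Finset.range (n + 1), if Odd k then n.choose k * (F k * F (n - k)) else 0 := by
  have hne : s.Nonempty := Finset.card_pos.1 (by omega)
  obtain ⟨m, t, hm, rfl⟩ : ∃ m t, (∀ x ∈ t, x < m) ∧ s = insert m t :=
    ⟨s.max' hne, s.erase (s.max' hne), fun x hx => s.lt_max'_of_mem_erase_max' hne hx,
      (Finset.insert_erase (s.max'_mem hne)).symm⟩
  obtain rfl : t.card = n := by
    rw [Finset.card_insert_of_notMem fun h => (hm m h).false] at hs
    omega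
  rcases t.eq_empty_or_nonempty with rfl | ht
  · simp [upDowns_singleton]
  rw [if_neg ht.card_ne_zero, zero_add, card_upDowns_insert hm ht, Finset.sum_filter]
  calc ∑ A ∈ t.powerset, (if Odd A.card then (upDowns A).card * (upDowns (t \ A)).card else 0)
    _ = ∑ A ∈ t.powerset, if Odd A.card then F A.card * F (t.card - A.card) else 0 :=
      Finset.sum_congr rfl fun A hA => by
        have hAt := Finset.mem_powerset.1 hA
        rw [hF A (Finset.card_le_card hAt), hF _ (Finset.card_le_card Finset.sdiff_subset),
          Finset.card_sdiff_of_subset hAt]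
    _ = _ := by
      rw [Finset.sum_powerset_apply_card fun k => if Odd k then F k * F (t.card - k) else 0]
      simp only [smul_eq_mul, mul_ite, mul_zero]

theorem card_upDowns (s : Finset ℤ) : (upDowns s).card = eulerNum s.card := by
  induction h : s.card using Nat.strong_induction_on generalizing s with
  | _ n ih =>
    rw [eulerNum_eq_card_upDowns_baseList]
    cases n with
    | zero => rw [Finset.card_eq_zero.1 h, Finset.card_eq_zero.1 (card_toFinset_baseList 0)]
    | succ n =>
      have hF (A : Finset ℤ) (hA : A.card ≤ n) : (upDowns A).card = eulerNum A.card :=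
        ih _ (Nat.lt_succ_of_le hA) A rfl
      rw [card_upDowns_eq_sum_of_card_eq_succ hF h,
        card_upDowns_eq_sum_of_card_eq_succ hF (card_toFinset_baseList _)]

theorem eulerNum_zero : eulerNum 0 = 1 := by
  simp [eulerNum_eq_card_upDowns_baseList, baseList, upDowns, Finset.filter_singleton]

theorem eulerNum_succ (n : ℕ) :
    eulerNum (n + 1) = (if n = 0 then 1 else 0) + ∑ k ∈ Finset.range (n + 1),
      if Odd k then n.choose k * (eulerNum k * eulerNum (n - k)) else 0 := by
  rw [eulerNum_eq_card_upDowns_baseList]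
  exact card_upDowns_eq_sum_of_card_eq_succ (fun A _ => card_upDowns A) (card_toFinset_baseList _)

end EulerNumbers

section Analysis

open Complex Filter Topology

theorem iteratedDeriv_succ_of_hasDerivAt_const_add_mul {𝕜 𝔸 : Type*} [NontriviallyNormedField 𝕜]
    [NormedRing 𝔸] [NormedAlgebra 𝕜 𝔸] {f g : 𝕜 → 𝔸} {c : 𝔸} {x : 𝕜} {n : ℕ}
    (h : ∀ᶠ y in 𝓝 x, HasDerivAt f (c + g y * f y) y)
    (hf : ContDiffAt 𝕜 n f x) (hg : ContDiffAt 𝕜 n g x) :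
    iteratedDeriv (n + 1) f x = (if n = 0 then c else 0) + ∑ k ∈ Finset.range (n + 1),
      (n.choose k : 𝔸) * iteratedDeriv k g x * iteratedDeriv (n - k) f x := by
  have hderiv : deriv f =ᶠ[𝓝 x] fun y => c + g y * f y := h.mono fun y hy => hy.deriv
  rw [iteratedDeriv_succ', hderiv.iteratedDeriv_eq,
    iteratedDeriv_fun_add contDiffAt_const (hg.mul hf), iteratedDeriv_const,
    iteratedDeriv_fun_mul hg hf]

theorem hasDerivAt_complex_tan_eq_one_add_mul_self {z : ℂ} (hz : cos z ≠ 0) :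
    HasDerivAt tan (1 + tan z * tan z) z := by
  refine (hasDerivAt_tan hz).congr_deriv ?_
  rw [← sq, ← inv_one_add_tan_sq hz, one_div, inv_inv]

theorem hasDerivAt_complex_sec_add_tan {z : ℂ} (hz : cos z ≠ 0) :
    HasDerivAt (fun w => 1 / cos w + tan w) (1 + tan z * (1 / cos z + tan z)) z := by
  have hsec : HasDerivAt (fun w => 1 / cos w) (tan z * (1 / cos z)) z := by
    simp only [one_div]
    refine ((hasDerivAt_cos z).fun_inv hz).congr_deriv ?_
    rw [tan_eq_sin_div_cos, neg_neg]
    field_simp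
  refine (hsec.fun_add (hasDerivAt_complex_tan_eq_one_add_mul_self hz)).congr_deriv ?_
  ring

theorem eventually_nhds_zero_complex_cos_ne_zero : ∀ᶠ w in 𝓝 (0 : ℂ), cos w ≠ 0 :=
  continuous_cos.continuousAt.eventually_ne (by simp)

theorem iteratedDeriv_complex_tan_zero (n : ℕ) :
    iteratedDeriv n tan 0 = if Odd n then (eulerNum n : ℂ) else 0 := by
  have hsmooth (k : ℕ) : ContDiffAt ℂ k tan 0 := contDiffAt_tan.2 (by simp)
  induction n using Nat.strong_induction_on with
  | _ n ih =>
    cases n with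
    | zero => simp
    | succ n =>
      have hsummand : ∀ k ∈ Finset.range (n + 1),
          (n.choose k : ℂ) * iteratedDeriv k tan 0 * iteratedDeriv (n - k) tan 0 =
            if Odd (n + 1) ∧ Odd k then (n.choose k * (eulerNum k * eulerNum (n - k)) : ℂ)
            else 0 := fun k hk => by
        rw [Finset.mem_range] at hk
        rw [ih k hk, ih (n - k) (by omega)]
        by_cases hodd : Odd k
        · have hparity : Odd (n - k) ↔ Odd (n + 1) := by grind
          simp [hodd, hparity, mul_assoc]
        · simp [hodd]
      rw [iteratedDeriv_succ_of_hasDerivAt_const_add_mul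
          (eventually_nhds_zero_complex_cos_ne_zero.mono fun w =>
            hasDerivAt_complex_tan_eq_one_add_mul_self)
          (hsmooth n) (hsmooth n), Finset.sum_congr rfl hsummand, eulerNum_succ]
      by_cases hodd : Odd (n + 1)
      · simp [hodd]
      · have hn : n ≠ 0 := by
          rintro rfl
          exact hodd odd_one
        simp [hodd, hn]

theorem iteratedDeriv_complex_sec_add_tan_zero (n : ℕ) :
    iteratedDeriv n (fun w => 1 / cos w + tan w) 0 = eulerNum n := by
  have htan (k : ℕ) : ContDiffAt ℂ k tan 0 := contDiffAt_tan.2 (by simp)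
  have hsec (k : ℕ) : ContDiffAt ℂ k (fun w => 1 / cos w + tan w) 0 :=
    (contDiffAt_const.div contDiff_cos.contDiffAt (by simp)).add (htan k)
  induction n using Nat.strong_induction_on with
  | _ n ih =>
    cases n with
    | zero => simp [eulerNum_zero]
    | succ n =>
      rw [iteratedDeriv_succ_of_hasDerivAt_const_add_mul
        (eventually_nhds_zero_complex_cos_ne_zero.mono fun w => hasDerivAt_complex_sec_add_tan)
        (hsec n) (htan n), eulerNum_succ]
      push_cast
      congr 1
      refine Finset.sum_congr rfl fun k _ => ?_
      rw [iteratedDeriv_complex_tan_zero, ih (n - k) (by omega)]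
      split_ifs <;> ring

theorem complex_cos_ne_zero_of_abs_re_lt {z : ℂ} (hz : |z.re| < Real.pi / 2) : cos z ≠ 0 := by
  have hre := abs_lt.1 hz
  refine cos_ne_zero_of_arctan_bounds ?_ hre.1 hre.2.le
  rintro rfl
  simp at hre

end Analysis

theorem andre_egf_general (z : ℂ) (hz : ‖z‖ < Real.pi / 2) :
    HasSum (fun n : ℕ => (eulerNum n : ℂ) * z ^ n / n.factorial)
      (1 / Complex.cos z + Complex.tan z) := by
  have hdiff : DifferentiableOn ℂ (fun w => 1 / Complex.cos w + Complex.tan w)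
      (Metric.ball 0 (Real.pi / 2)) := fun w hw => by
    have hre := (Complex.abs_re_le_norm w).trans_lt (mem_ball_zero_iff.1 hw)
    exact (hasDerivAt_complex_sec_add_tan
      (complex_cos_ne_zero_of_abs_re_lt hre)).differentiableAt.differentiableWithinAt
  have htaylor := Complex.hasSum_taylorSeries_on_ball hdiff (mem_ball_zero_iff.2 hz)
  refine htaylor.congr_fun fun n => ?_
  rw [iteratedDeriv_complex_sec_add_tan_zero, sub_zero, smul_eq_mul, smul_eq_mul]
  ring

/-- André's theorem: the EGF of the up-down permutation numbers is sec x + tan x. -/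
theorem andre_egf (x : ℝ) (hx : |x| < Real.pi / 2) :
    HasSum (fun n : ℕ => (eulerNum n : ℝ) * x ^ n / n.factorial)
      (1 / Real.cos x + Real.tan x) := by
  rw [← Complex.hasSum_ofReal]
  exact_mod_cast andre_egf_general x (by simpa using hx)
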